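/- arXiv:2011.11502 — 5 statements merged into one kernel-verified Lean document; each statement's English description precedes it below -/
import Mathlib

section
/- Cauchy formula for repeated integration: for every natural number n ≥ 1, every real a, every x ≥ a, and every continuous function f : ℝ → ℝ, the n-fold iterated integral of f with lower limit a satisfies (ₐI_xⁿ f)(x) = (1/(n-1)!) ∫_a^x (x-t)^{n-1} f(t) dt, where ₐI_x f denotes the operator g ↦ (x ↦ ∫_a^x g(t) dt) and ₐI_xⁿ is its n-fold composition. -/
open MeasureTheory intervalIntegral

/-!
Induction on the number of integrations, for all integrable `f` at once: the iterate of order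
`n + 2` of `f` is the iterate of order `n + 1` of its primitive, so the inductive hypothesis gives
a double integral of `(x - t) ^ n • f s` over the triangle with vertices `(a, a)`, `(x, a)`,
`(x, x)`. Exchanging the order of integration leaves the elementary inner integral of
`(x - t) ^ n` over `t` between `s` and `x`.
-/

open Set Function
open scoped Nat Interval

variable {E : Type*} [NormedAddCommGroup E] [NormedSpace ℝ E]

section Triangle

variable {μ ν : Measure ℝ} [NullSingletonClass μ]

lemma intervalIntegral_indicator_Ici {f : ℝ → E} {a b c : ℝ} (hc : c ∈ Icc a b) :
    ∫ t in a..b, (Ici c).indicator f t ∂μ = ∫ t in c..b, f t ∂μ := by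
  have hinter : Icc a b ∩ Ici c = Icc c b := by
    rw [← Ici_inter_Iic, inter_right_comm, Ici_inter_Ici, sup_eq_right.2 hc.1, Ici_inter_Iic]
  rw [integral_of_le (hc.1.trans hc.2), integral_of_le hc.2, ← integral_Icc_eq_integral_Ioc,
    ← integral_Icc_eq_integral_Ioc, setIntegral_indicator measurableSet_Ici, hinter]

variable [SFinite μ] [SFinite ν]

lemma intervalIntegral_triangle_swap_of_le {F : ℝ → ℝ → E} {a b : ℝ} (hab : a ≤ b)
    (hF : Integrable (uncurry F) ((μ.restrict (Ι a b)).prod (ν.restrict (Ι a b)))) :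
    ∫ t in a..b, ∫ s in a..t, F t s ∂ν ∂μ = ∫ s in a..b, ∫ t in s..b, F t s ∂μ ∂ν := by
  have hindicator : Integrable (uncurry fun t s ↦ (Iic t).indicator (F t) s)
      ((μ.restrict (Ι a b)).prod (ν.restrict (Ι a b))) :=
    hF.indicator (measurableSet_le measurable_snd measurable_fst)
  calc ∫ t in a..b, ∫ s in a..t, F t s ∂ν ∂μ
      = ∫ t in a..b, ∫ s in a..b, (Iic t).indicator (F t) s ∂ν ∂μ :=
        integral_congr fun t ht ↦
          (intervalIntegral.integral_indicator (uIcc_of_le hab ▸ ht)).symm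
    _ = ∫ s in a..b, ∫ t in a..b, (Ici s).indicator (F · s) t ∂μ ∂ν := by
        simp only [integral_of_le hab]
        exact integral_integral_swap (uIoc_of_le hab ▸ hindicator)
    _ = ∫ s in a..b, ∫ t in s..b, F t s ∂μ ∂ν :=
        integral_congr fun s hs ↦ intervalIntegral_indicator_Ici (uIcc_of_le hab ▸ hs)

variable [NullSingletonClass ν]

lemma intervalIntegral_triangle_swap {F : ℝ → ℝ → E} {a b : ℝ}
    (hF : Integrable (uncurry F) ((μ.restrict (Ι a b)).prod (ν.restrict (Ι a b)))) :
    ∫ t in a..b, ∫ s in a..t, F t s ∂ν ∂μ = ∫ s in a..b, ∫ t in s..b, F t s ∂μ ∂ν := by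
  rcases le_total a b with hab | hba
  · exact intervalIntegral_triangle_swap_of_le hab hF
  · have hreverse :
        ∫ s in b..a, ∫ t in b..s, F t s ∂μ ∂ν = ∫ t in b..a, ∫ s in t..a, F t s ∂ν ∂μ :=
      intervalIntegral_triangle_swap_of_le (F := fun s t ↦ F t s) hba (uIoc_comm a b ▸ hF.swap)
    calc ∫ t in a..b, ∫ s in a..t, F t s ∂ν ∂μ
        = ∫ t in b..a, ∫ s in t..a, F t s ∂ν ∂μ := by
          simp only [integral_symm b a, integral_symm _ a, intervalIntegral.integral_neg, neg_neg]
      _ = ∫ s in b..a, ∫ t in b..s, F t s ∂μ ∂ν := hreverse.symm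
      _ = ∫ s in a..b, ∫ t in s..b, F t s ∂μ ∂ν := by
          simp only [integral_symm b, intervalIntegral.integral_neg, neg_neg]

lemma integral_smul_integral_eq_integral_integral_smul {𝕜 : Type*} [RCLike 𝕜] [NormedSpace 𝕜 E]
    [CompleteSpace E] {g : ℝ → 𝕜} {f : ℝ → E} {a b : ℝ}
    (hg : IntervalIntegrable g μ a b) (hf : IntervalIntegrable f ν a b) :
    ∫ t in a..b, g t • ∫ s in a..t, f s ∂ν ∂μ = ∫ s in a..b, (∫ t in s..b, g t ∂μ) • f s ∂ν := by
  simpa only [intervalIntegral.integral_smul, intervalIntegral.integral_smul_const] using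
    intervalIntegral_triangle_swap (F := fun t s ↦ g t • f s) (hg.def'.smul_prod hf.def')

end Triangle

lemma integral_const_sub_pow (n : ℕ) (a b x : ℝ) :
    ∫ t in a..b, (x - t) ^ n = ((x - a) ^ (n + 1) - (x - b) ^ (n + 1)) / (n + 1) := by
  simp [integral_comp_sub_left (· ^ n)]

lemma integral_const_sub_pow_smul_integral [CompleteSpace E] (n : ℕ) {a x : ℝ} {f : ℝ → E}
    (hf : IntervalIntegrable f volume a x) :
    ∫ t in a..x, (x - t) ^ n • ∫ s in a..t, f s
      = ((n : ℝ) + 1)⁻¹ • ∫ t in a..x, (x - t) ^ (n + 1) • f t := by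
  have hpow : IntervalIntegrable (fun t ↦ (x - t) ^ n) volume a x :=
    Continuous.intervalIntegrable (by fun_prop) a x
  have hinner (s : ℝ) : ∫ t in s..x, (x - t) ^ n = ((n : ℝ) + 1)⁻¹ * (x - s) ^ (n + 1) := by
    rw [integral_const_sub_pow, sub_self, zero_pow n.succ_ne_zero, sub_zero, div_eq_inv_mul]
  simp only [integral_smul_integral_eq_integral_integral_smul hpow hf, hinner, mul_smul,
    intervalIntegral.integral_smul]

theorem cauchy_repeated_integration_general [CompleteSpace E] (n : ℕ) {a x : ℝ} {f : ℝ → E}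
    (hf : IntervalIntegrable f volume a x) :
    (fun g : ℝ → E ↦ fun y ↦ ∫ t in a..y, g t)^[n + 1] f x
      = (n ! : ℝ)⁻¹ • ∫ t in a..x, (x - t) ^ n • f t := by
  induction n generalizing f with
  | zero => simp
  | succ n ih =>
    have hprimitive : IntervalIntegrable (fun y ↦ ∫ t in a..y, f t) volume a x :=
      (continuousOn_primitive_interval' hf left_mem_uIcc).intervalIntegrable
    rw [iterate_succ_apply, ih hprimitive, integral_const_sub_pow_smul_integral n hf, smul_smul,
      Nat.factorial_succ, Nat.cast_mul, Nat.cast_succ, mul_inv_rev]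

/-- Cauchy formula for repeated integration: the `n`-fold iterate of the
integration operator `g ↦ (x ↦ ∫ t in a..x, g t)` applied to a continuous `f`
equals `(1/(n-1)!) ∫ t in a..x, (x-t)^(n-1) * f t` for `x ≥ a`. -/
theorem cauchy_repeated_integration
    (n : ℕ) (hn : 1 ≤ n) (a : ℝ) (f : ℝ → ℝ) (hf : Continuous f)
    (x : ℝ) (hx : a ≤ x) :
    (fun g : ℝ → ℝ => fun y : ℝ => ∫ t in a..y, g t)^[n] f x
      = (1 / (Nat.factorial (n - 1) : ℝ)) * ∫ t in a..x, (x - t) ^ (n - 1) * f t := by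
  obtain ⟨m, rfl⟩ := Nat.exists_eq_add_of_le' hn
  simpa using cauchy_repeated_integration_general m (hf.intervalIntegrable a x)
end

section
/- Laplace transform of the two-parameter Mittag-Leffler function: for real α > 0, β > 0, real a, and real s > 0 with |a| < s^α, one has ∫_0^∞ e^{-st} t^{β-1} E_{α,β}(a t^α) dt = s^{α-β} / (s^α - a). -/
/-!
The Laplace transform of `t ^ (p - 1) / Γ(p)` is `s ^ (-p)`, by Euler's integral. The function
`t ^ (β - 1) * E_{α,β}(a t ^ α)` is the series of these kernels with exponents `p = α k + β` and
coefficients `a ^ k`, so its transform is the geometric series of ratio `a / s ^ α`. Since the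
kernels are positive, absolute convergence of the transformed series already justifies
integrating term by term.
-/

open MeasureTheory Real

/-- The two-parameter Mittag-Leffler function `E_{α,β}(t) = Σ_k t^k / Γ(αk+β)`. -/
noncomputable def mittagLeffler (α β t : ℝ) : ℝ :=
  ∑' k : ℕ, t ^ k / Real.Gamma (α * k + β)

section Kernel

variable {p s : ℝ}

lemma integral_exp_neg_mul_mul_rpow_div_Gamma (hp : 0 < p) (hs : 0 < s) :
    ∫ t in Set.Ioi (0 : ℝ), exp (-s * t) * (t ^ (p - 1) / Gamma p) = s ^ (-p) := by
  simp_rw [neg_mul, ← mul_div_assoc, mul_comm (exp _)]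
  rw [integral_div, integral_rpow_mul_exp_neg_mul_Ioi hp hs, one_div, inv_rpow hs.le,
    ← rpow_neg hs.le, mul_div_cancel_right₀ _ (Gamma_pos_of_pos hp).ne']

lemma integrableOn_exp_neg_mul_mul_rpow_div_Gamma (hp : 0 < p) (hs : 0 < s) :
    IntegrableOn (fun t ↦ exp (-s * t) * (t ^ (p - 1) / Gamma p)) (Set.Ioi 0) := by
  refine .of_integral_ne_zero ?_
  rw [integral_exp_neg_mul_mul_rpow_div_Gamma hp hs]
  exact (rpow_pos_of_pos hs _).ne'

end Kernel

theorem hasSum_integral_exp_neg_mul_smul_tsum {ι E : Type*} [Countable ι] [NormedAddCommGroup E]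
    [NormedSpace ℝ E] [CompleteSpace E] {s : ℝ} {p : ι → ℝ} {c : ι → E} (hs : 0 < s)
    (hp : ∀ i, 0 < p i) (hc : Summable fun i ↦ s ^ (-p i) * ‖c i‖) :
    HasSum (fun i ↦ s ^ (-p i) • c i)
      (∫ t in Set.Ioi (0 : ℝ), ∑' i, (exp (-s * t) * (t ^ (p i - 1) / Gamma (p i))) • c i) := by
  have integral_norm (i : ι) :
      ∫ t in Set.Ioi (0 : ℝ), ‖(exp (-s * t) * (t ^ (p i - 1) / Gamma (p i))) • c i‖
        = s ^ (-p i) * ‖c i‖ := by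
    rw [← integral_exp_neg_mul_mul_rpow_div_Gamma (hp i) hs, ← integral_mul_const]
    refine setIntegral_congr_fun measurableSet_Ioi fun t (ht : 0 < t) ↦ ?_
    have Gamma_pos : 0 < Gamma (p i) := Gamma_pos_of_pos (hp i)
    rw [norm_smul, norm_of_nonneg (by positivity)]
  have swap := hasSum_integral_of_summable_integral_norm
    (fun i ↦ (integrableOn_exp_neg_mul_mul_rpow_div_Gamma (hp i) hs).smul_const (c i))
    (by simpa only [integral_norm] using hc)
  simpa only [integral_smul_const, integral_exp_neg_mul_mul_rpow_div_Gamma (hp _) hs] using swap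

lemma rpow_mul_mittagLeffler_mul_rpow (α β a : ℝ) {t : ℝ} (ht : 0 < t) :
    t ^ (β - 1) * mittagLeffler α β (a * t ^ α)
      = ∑' k : ℕ, t ^ (α * k + β - 1) / Gamma (α * k + β) * a ^ k := by
  rw [mittagLeffler, ← tsum_mul_left]
  refine tsum_congr fun k ↦ ?_
  rw [add_sub_assoc, rpow_add ht, rpow_mul_natCast ht.le, mul_pow]
  ring

lemma rpow_neg_mul_natCast_add_mul_pow (α β a : ℝ) {s : ℝ} (hs : 0 < s) (k : ℕ) :
    s ^ (-(α * k + β)) * a ^ k = s ^ (-β) * (a / s ^ α) ^ k := by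
  rw [neg_add_rev, rpow_add hs, rpow_neg hs.le (α * k), rpow_mul_natCast hs.le, div_pow]
  ring

lemma hasSum_rpow_neg_mul_pow (β : ℝ) {α a s : ℝ} (hs : 0 < s) (ha : |a| < s ^ α) :
    HasSum (fun k : ℕ ↦ s ^ (-(α * k + β)) * a ^ k) (s ^ (α - β) / (s ^ α - a)) := by
  have hsα : 0 < s ^ α := rpow_pos_of_pos hs α
  have ratio_lt_one : |a / s ^ α| < 1 := by rwa [abs_div, abs_of_pos hsα, div_lt_one hsα]
  have closed_form : s ^ (α - β) / (s ^ α - a) = s ^ (-β) * (1 - a / s ^ α)⁻¹ := by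
    rw [one_sub_div hsα.ne', inv_div, sub_eq_neg_add, rpow_add hs, mul_div_assoc]
  simp only [closed_form, rpow_neg_mul_natCast_add_mul_pow α β a hs]
  exact (hasSum_geometric_of_abs_lt_one ratio_lt_one).mul_left _

/-- Laplace transform of the two-parameter Mittag-Leffler function:
`∫_0^∞ e^{-st} t^{β-1} E_{α,β}(a t^α) dt = s^{α-β} / (s^α - a)`
for `α, β > 0`, `s > 0` and `|a| < s^α`. -/
theorem laplace_mittagLeffler
    (α β a s : ℝ) (hα : 0 < α) (hβ : 0 < β) (hs : 0 < s)
    (ha : |a| < s ^ α) :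
    ∫ t in Set.Ioi (0:ℝ),
        Real.exp (-s * t) * t ^ (β - 1) * mittagLeffler α β (a * t ^ α)
      = s ^ (α - β) / (s ^ α - a) := by
  have exponent_pos (k : ℕ) : 0 < α * k + β := by positivity
  have summable_norm : Summable fun k : ℕ ↦ s ^ (-(α * k + β)) * ‖a ^ k‖ := by
    simp only [norm_pow, norm_eq_abs]
    exact (hasSum_rpow_neg_mul_pow β hs (by rwa [abs_abs])).summable
  calc ∫ t in Set.Ioi (0 : ℝ), exp (-s * t) * t ^ (β - 1) * mittagLeffler α β (a * t ^ α)
      = ∫ t in Set.Ioi (0 : ℝ), ∑' k : ℕ,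
          (exp (-s * t) * (t ^ (α * k + β - 1) / Gamma (α * k + β))) • a ^ k := by
        refine setIntegral_congr_fun measurableSet_Ioi fun t (ht : 0 < t) ↦ ?_
        simp only [smul_eq_mul, mul_assoc, tsum_mul_left,
          rpow_mul_mittagLeffler_mul_rpow α β a ht]
    _ = s ^ (α - β) / (s ^ α - a) :=
        (hasSum_integral_exp_neg_mul_smul_tsum hs exponent_pos summable_norm).unique
          (hasSum_rpow_neg_mul_pow β hs ha)
end

section
/- Derivative of the one-parameter Mittag-Leffler function of a power argument: for real α > 0, real a, and every t > 0, the function t ↦ E_α(a t^α) is differentiable at t and d/dt E_α(a t^α) = a t^{α-1} E_{α,α}(a t^α). -/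
/-!
Restricting Euler's integral to `(C, ∞)` gives `C ^ (s - 1) * e ^ (-C) ≤ Γ s`, so `Γ` dominates
every exponential and the Mittag-Leffler series converges everywhere. It may therefore be
differentiated termwise. For `β = 1` the functional equation `Γ (s + 1) = s * Γ s` at
`s = α (k + 1)` absorbs the factor `k + 1` of the derivative, so that `α * E_{α,1}' = E_{α,α}`;
the chain rule with `u ↦ a u ^ α` brings the factor `α` back.
-/

open MeasureTheory Real

open Filter Asymptotics

section PowerSeries

variable {𝕜 F : Type*} [NormedAddCommGroup F]

theorem summable_natCast_mul_pow_mul_norm [NormedField 𝕜] [NormedSpace 𝕜 F] {c : ℕ → F} {r : 𝕜}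
    {ρ : ℝ} (hc : Summable fun k : ℕ => r ^ k • c k) (hρ : 0 ≤ ρ) (hρr : ρ < ‖r‖) :
    Summable fun k : ℕ => k * ρ ^ (k - 1) * ‖c k‖ := by
  have hr : 0 < ‖r‖ := hρ.trans_lt hρr
  have hgeom : Summable fun k : ℕ => ((k + 1 : ℕ) : ℝ) * (ρ / ‖r‖) ^ k := by
    have hq : ‖ρ / ‖r‖‖ < 1 := by
      rwa [norm_of_nonneg (by positivity), div_lt_one hr]
    simpa only [Nat.cast_add_one, add_mul, one_mul, pow_one] using
      (summable_pow_mul_geometric_of_norm_lt_one 1 hq).add (summable_geometric_of_norm_lt_one hq)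
  have hbdd : (fun k : ℕ => r ^ (k + 1) • c (k + 1)) =O[atTop] fun _ => (1 : ℝ) :=
    ((tendsto_add_atTop_iff_nat 1).2 hc.tendsto_atTop_zero).isBigO_one ℝ
  rw [← summable_nat_add_iff 1]
  refine summable_of_isBigO_nat hgeom ?_
  refine (((isBigO_refl (fun k : ℕ => ((k + 1 : ℕ) : ℝ) * (ρ / ‖r‖) ^ k) atTop).mul
    hbdd.norm_left).const_mul_left ‖r‖⁻¹).congr (fun k => ?_) fun k => mul_one _
  rw [norm_smul, norm_pow, Nat.add_sub_cancel, div_pow, pow_succ ‖r‖]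
  field_simp

theorem hasDerivAt_tsum_pow_smul [RCLike 𝕜] [NormedSpace 𝕜 F] [CompleteSpace F] {c : ℕ → F}
    {r x : 𝕜} (hc : Summable fun k : ℕ => r ^ k • c k) (hx : ‖x‖ < ‖r‖) :
    HasDerivAt (fun y : 𝕜 => ∑' k : ℕ, y ^ k • c k)
      (∑' k : ℕ, ((k + 1 : ℕ) * x ^ k) • c (k + 1)) x := by
  obtain ⟨ρ, hxρ, hρr⟩ := exists_between hx
  have hρ : 0 < ρ := (norm_nonneg x).trans_lt hxρ
  have hbound := summable_natCast_mul_pow_mul_norm hc hρ.le hρr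
  have hle : ∀ (k : ℕ), ∀ y ∈ Metric.ball (0 : 𝕜) ρ,
      ‖((k : 𝕜) * y ^ (k - 1)) • c k‖ ≤ k * ρ ^ (k - 1) * ‖c k‖ := fun k y hy => by
    have hy : ‖y‖ ≤ ρ := (mem_ball_zero_iff.1 hy).le
    rw [norm_smul, norm_mul, norm_pow, RCLike.norm_natCast]
    gcongr
  have hx_mem : x ∈ Metric.ball (0 : 𝕜) ρ := mem_ball_zero_iff.2 hxρ
  have hsum_zero : Summable fun k : ℕ => (0 : 𝕜) ^ k • c k :=
    summable_of_ne_finset_zero (s := {0}) fun k hk => by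
      rw [zero_pow (by simpa using hk), zero_smul]
  have hderiv := hasDerivAt_tsum_of_isPreconnected (g := fun k y => y ^ k • c k) hbound
    Metric.isOpen_ball Metric.isPreconnected_ball
    (fun k y _ => (hasDerivAt_pow k y).smul_const (c k)) hle (Metric.mem_ball_self hρ) hsum_zero
    hx_mem
  have hsum_deriv : Summable fun k : ℕ => ((k : 𝕜) * x ^ (k - 1)) • c k :=
    hbound.of_norm_bounded fun k => hle k x hx_mem
  simpa only [hsum_deriv.tsum_eq_zero_add, Nat.cast_zero, zero_mul, zero_smul, zero_add,
    Nat.add_sub_cancel] using hderiv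

end PowerSeries

theorem rpow_sub_one_mul_exp_neg_le_Gamma {C s : ℝ} (hC : 0 ≤ C) (hs : 1 ≤ s) :
    C ^ (s - 1) * exp (-C) ≤ Gamma s := by
  have hs0 : 0 < s := by linarith
  have hsub : Set.Ioi C ⊆ Set.Ioi 0 := Set.Ioi_subset_Ioi hC
  have hint := GammaIntegral_convergent hs0
  calc C ^ (s - 1) * exp (-C) = ∫ x in Set.Ioi C, C ^ (s - 1) * exp (-x) := by
        rw [integral_const_mul, integral_exp_neg_Ioi]
    _ ≤ ∫ x in Set.Ioi C, exp (-x) * x ^ (s - 1) := by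
        refine setIntegral_mono_on ((integrableOn_exp_neg_Ioi C).const_mul _)
          (hint.mono_set hsub) measurableSet_Ioi fun x (hx : C < x) => ?_
        rw [mul_comm]
        gcongr
    _ ≤ ∫ x in Set.Ioi 0, exp (-x) * x ^ (s - 1) := by
        refine setIntegral_mono_set hint ?_ hsub.eventuallyLE
        filter_upwards [ae_restrict_mem measurableSet_Ioi] with x (hx : 0 < x)
        exact mul_nonneg (exp_nonneg _) (rpow_nonneg hx.le _)
    _ = Gamma s := (Gamma_eq_integral hs0).symm

theorem isBigO_const_rpow_Gamma {C : ℝ} (hC : 0 < C) :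
    (fun s : ℝ => C ^ s) =O[atTop] Gamma := by
  refine IsBigO.of_bound (C * exp C) ?_
  filter_upwards [eventually_ge_atTop 1] with s hs
  rw [norm_of_nonneg (rpow_nonneg hC.le s), norm_of_nonneg (Gamma_nonneg_of_nonneg (by linarith))]
  calc C ^ s = C * exp C * (C ^ (s - 1) * exp (-C)) := by
        rw [rpow_sub_one hC.ne', exp_neg]
        field_simp
    _ ≤ C * exp C * Gamma s := by
        gcongr
        exact rpow_sub_one_mul_exp_neg_le_Gamma hC.le hs

section MittagLeffler

variable {α : ℝ}

/- At a pole of `Γ` the term is `x ^ k / 0 = 0`, in agreement with the zero of the entire function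
`1 / Γ` there. -/
theorem summable_mittagLeffler (hα : 0 < α) (β x : ℝ) :
    Summable fun k : ℕ => x ^ k / Gamma (α * k + β) := by
  have hx : 0 < |x| + 1 := by positivity
  set C : ℝ := (|x| + 1) ^ α⁻¹
  have hC : 0 < C := rpow_pos_of_pos hx _
  have hCpow (k : ℕ) : C ^ (α * k + β) = (|x| + 1) ^ k * C ^ β := by
    rw [rpow_add hC, rpow_mul hC.le, rpow_inv_rpow hx.le hα.ne', rpow_natCast]
  have hgeom : Summable fun k : ℕ => (x / (|x| + 1)) ^ k :=
    summable_geometric_of_norm_lt_one <| by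
      rw [norm_div, norm_eq_abs, norm_of_nonneg hx.le, div_lt_one hx]
      exact lt_add_one _
  have harg : Tendsto (fun k : ℕ => α * k + β) atTop atTop :=
    tendsto_atTop_add_const_right _ β (tendsto_natCast_atTop_atTop.const_mul_atTop hα)
  have hGamma : (fun k : ℕ => (Gamma (α * k + β))⁻¹) =O[atTop]
      fun k : ℕ => (C ^ (α * k + β))⁻¹ :=
    ((isBigO_const_rpow_Gamma hC).comp_tendsto harg).inv_rev <|
      .of_forall fun k h => absurd h (rpow_pos_of_pos hC _).ne'
  refine summable_of_isBigO_nat (hgeom.mul_left (C ^ β)⁻¹) ?_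
  refine ((isBigO_refl (fun k : ℕ => x ^ k) atTop).mul hGamma).congr
    (fun k => (div_eq_mul_inv _ _).symm) fun k => ?_
  rw [hCpow, div_pow]
  field_simp

theorem hasDerivAt_mittagLeffler (hα : 0 < α) (β x : ℝ) :
    HasDerivAt (mittagLeffler α β)
      (∑' k : ℕ, (k + 1 : ℕ) * x ^ k / Gamma (α * (k + 1 : ℕ) + β)) x := by
  have hx : ‖x‖ < ‖|x| + 1‖ := by
    rw [norm_of_nonneg (by positivity : 0 ≤ |x| + 1)]
    exact lt_add_one |x|
  exact hasDerivAt_tsum_pow_smul (c := fun k : ℕ => (Gamma (α * k + β))⁻¹)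
    (summable_mittagLeffler hα β (|x| + 1)) hx

theorem hasDerivAt_mittagLeffler_one (hα : 0 < α) (x : ℝ) :
    HasDerivAt (mittagLeffler α 1) (mittagLeffler α α x / α) x := by
  convert hasDerivAt_mittagLeffler hα 1 x using 1
  rw [mittagLeffler, ← tsum_div_const]
  refine tsum_congr fun k => ?_
  have hs : α * (k + 1 : ℕ) ≠ 0 := by positivity
  have hsucc : α * k + α = α * (k + 1 : ℕ) := by push_cast; ring
  rw [hsucc, Gamma_add_one hs]
  field_simp

end MittagLeffler

/-- Derivative of the one-parameter Mittag-Leffler function of a power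
argument: for `α > 0` and `t > 0`,
`d/dt E_α(a t^α) = a t^{α-1} E_{α,α}(a t^α)`. -/
theorem hasDerivAt_mittagLeffler_rpow
    (α a : ℝ) (hα : 0 < α) (t : ℝ) (ht : 0 < t) :
    HasDerivAt (fun u : ℝ => mittagLeffler α 1 (a * u ^ α))
      (a * t ^ (α - 1) * mittagLeffler α α (a * t ^ α)) t := by
  have hinner : HasDerivAt (fun u : ℝ => a * u ^ α) (a * (α * t ^ (α - 1))) t :=
    (hasDerivAt_rpow_const (.inl ht.ne')).const_mul a
  have houter := hasDerivAt_mittagLeffler_one hα (a * t ^ α)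
  refine (houter.comp t hinner).congr_deriv ?_
  field_simp
end

section
/- Caputo fractional derivative of the sine function: for real α with 0 < α < 1, real c, real a, and every x > a, (1/Γ(1-α)) ∫_a^x (x-t)^{-α} c cos(c(t-a)) dt = c (x-a)^{1-α} E_{2,2-α}( -c² (x-a)² ). -/
/-!
Write `I^β` for the Riemann–Liouville integral of order `β` based at `a`. The Beta integral gives
`I^β (t - a)^(γ - 1) = Γ(γ) / Γ(γ + β) (x - a)^(γ + β - 1)`, which termwise turns the Mittag-Leffler
function `(t - a)^(γ - 1) E_{α,γ}(l (t - a)^α)` into `(x - a)^(γ + β - 1) E_{α,γ+β}(l (x - a)^α)`: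
the factors `Γ(αk + γ)` cancel. The Caputo derivative of order `α` is `I^(1 - α)` of the derivative,
and `cos (c (t - a)) = E_{2,1}(-c² (t - a)²)`.
-/

open MeasureTheory Real

/-- The Riemann–Liouville fractional integral of order `β` of `f`, based at `a` and evaluated at
`x`. The Caputo derivative of order `α` in `(0, 1)` of `g` is the integral of order `1 - α` of the
derivative of `g`. -/
noncomputable def riemannLiouvilleIntegral (β a : ℝ) (f : ℝ → ℝ) (x : ℝ) : ℝ :=
  1 / Gamma β * ∫ t in a..x, (x - t) ^ (β - 1) * f t

section MittagLeffler

lemma exp_neg_mul_rpow_le_Gamma {r s : ℝ} (hr : 0 < r) (hs : 1 ≤ s) :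
    exp (-(r + 1)) * r ^ (s - 1) ≤ Gamma s := by
  have hint : IntegrableOn (fun y ↦ exp (-y) * y ^ (s - 1)) (Set.Ioi 0) :=
    GammaIntegral_convergent (by linarith)
  have hsub : Set.Ioc r (r + 1) ⊆ Set.Ioi 0 := fun y hy ↦ hr.trans hy.1
  have hlower : ∀ y ∈ Set.Ioc r (r + 1),
      exp (-(r + 1)) * r ^ (s - 1) ≤ exp (-y) * y ^ (s - 1) := fun y ⟨hry, hyr⟩ ↦ by
    gcongr
  calc exp (-(r + 1)) * r ^ (s - 1)
      = ∫ _ in Set.Ioc r (r + 1), exp (-(r + 1)) * r ^ (s - 1) := by simp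
    _ ≤ ∫ y in Set.Ioc r (r + 1), exp (-y) * y ^ (s - 1) :=
        setIntegral_mono_on (integrableOn_const (by simp)) (hint.mono_set hsub)
          measurableSet_Ioc hlower
    _ ≤ ∫ y in Set.Ioi 0, exp (-y) * y ^ (s - 1) := by
        refine setIntegral_mono_set hint ?_ hsub.eventuallyLE
        filter_upwards [ae_restrict_mem measurableSet_Ioi] with y (hy : 0 < y)
        simp only [Pi.zero_apply]
        positivity
    _ = Gamma s := (Gamma_eq_integral (by linarith)).symm

lemma rpow_mul_mul_rpow_pow {y : ℝ} (hy : 0 < y) (α γ l : ℝ) (k : ℕ) :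
    y ^ (γ - 1) * (l * y ^ α) ^ k = l ^ k * y ^ (α * k + γ - 1) := by
  rw [add_sub_assoc, rpow_add hy, rpow_mul_natCast hy.le, mul_pow]
  ring

/- Since `Γ(s)` dominates `r ^ s` for every `r`, the series is eventually dominated by a geometric
one of ratio `|t| / r ^ α`, and `r` may be taken as large as needed. -/
lemma summable_pow_div_Gamma {α : ℝ} (hα : 0 < α) (β t : ℝ) :
    Summable fun k : ℕ ↦ t ^ k / Gamma (α * k + β) := by
  obtain ⟨r, hr, hrα⟩ : ∃ r : ℝ, 0 < r ∧ r ^ α = |t| + 1 :=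
    ⟨(|t| + 1) ^ α⁻¹, by positivity, rpow_inv_rpow (by positivity) hα.ne'⟩
  have hratio : |t| / r ^ α < 1 := by
    rw [hrα, div_lt_one (by positivity)]
    exact lt_add_one |t|
  have hgeom := (summable_geometric_of_lt_one (by positivity) hratio).mul_left
    (exp (-(r + 1)) * r ^ (β - 1))⁻¹
  have hlarge : ∀ᶠ k : ℕ in Filter.atTop, 1 ≤ α * k + β :=
    (Filter.tendsto_atTop_add_const_right _ β
      (tendsto_natCast_atTop_atTop.const_mul_atTop hα)).eventually_ge_atTop 1
  refine hgeom.of_norm_bounded_eventually_nat ?_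
  filter_upwards [hlarge] with k hk
  have hΓ : exp (-(r + 1)) * r ^ (β - 1) * (r ^ α) ^ k ≤ Gamma (α * k + β) := by
    refine le_of_eq_of_le ?_ (exp_neg_mul_rpow_le_Gamma hr hk)
    rw [add_sub_assoc, rpow_add hr, rpow_mul_natCast hr.le]
    ring
  rw [norm_div, norm_pow, norm_eq_abs, norm_of_nonneg (Gamma_nonneg_of_nonneg (by linarith))]
  calc |t| ^ k / Gamma (α * k + β)
      ≤ |t| ^ k / (exp (-(r + 1)) * r ^ (β - 1) * (r ^ α) ^ k) := by gcongr
    _ = (exp (-(r + 1)) * r ^ (β - 1))⁻¹ * (|t| / r ^ α) ^ k := by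
        rw [div_pow]
        field_simp

lemma cos_eq_mittagLeffler (z : ℝ) : cos z = mittagLeffler 2 1 (-z ^ 2) := by
  rw [mittagLeffler, ← (hasSum_cos z).tsum_eq]
  refine tsum_congr fun k ↦ ?_
  have hΓ : Gamma (2 * k + 1) = (2 * k).factorial := by
    exact_mod_cast Gamma_nat_eq_factorial (2 * k)
  rw [hΓ, neg_pow (z ^ 2), pow_mul]

end MittagLeffler

section BetaIntegral

variable {β γ a x : ℝ}

lemma integral_sub_rpow_mul_sub_rpow (hβ : 0 < β) (hγ : 0 < γ) (hx : a < x) :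
    ∫ t in a..x, (x - t) ^ (β - 1) * (t - a) ^ (γ - 1) =
      (x - a) ^ (γ + β - 1) * (Gamma γ * Gamma β / Gamma (γ + β)) := by
  have hxa : 0 < x - a := sub_pos.2 hx
  have hshift : ∫ t in a..x, (x - t) ^ (β - 1) * (t - a) ^ (γ - 1) =
      ∫ t in (0 : ℝ)..(x - a), t ^ (γ - 1) * (x - a - t) ^ (β - 1) := by
    simpa [mul_comm] using intervalIntegral.integral_comp_sub_right (a := a) (b := x)
      (fun t ↦ t ^ (γ - 1) * (x - a - t) ^ (β - 1)) a
  have hcomplex := Complex.betaIntegral_scaled γ β hxa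
  rw [Complex.betaIntegral_eq_Gamma_mul_div _ _ (by simpa) (by simpa)] at hcomplex
  rw [hshift]
  apply Complex.ofReal_injective
  calc ((∫ t in (0 : ℝ)..(x - a), t ^ (γ - 1) * (x - a - t) ^ (β - 1) : ℝ) : ℂ)
      = ∫ t in (0 : ℝ)..(x - a), (t : ℂ) ^ ((γ : ℂ) - 1) *
          (((x - a : ℝ) : ℂ) - t) ^ ((β : ℂ) - 1) := by
        rw [← intervalIntegral.integral_ofReal]
        refine intervalIntegral.integral_congr fun t ht ↦ ?_
        rw [Set.uIcc_of_le hxa.le] at ht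
        push_cast [Complex.ofReal_cpow ht.1, Complex.ofReal_cpow (sub_nonneg.2 ht.2)]
        rfl
    _ = (((x - a) ^ (γ + β - 1) * (Gamma γ * Gamma β / Gamma (γ + β)) : ℝ) : ℂ) := by
        rw [hcomplex]
        push_cast [Complex.ofReal_cpow hxa.le, ← Complex.Gamma_ofReal]
        rfl

lemma intervalIntegrable_sub_rpow_mul_sub_rpow (hβ : 0 < β) (hγ : 0 < γ) (hx : a < x) :
    IntervalIntegrable (fun t ↦ (x - t) ^ (β - 1) * (t - a) ^ (γ - 1)) volume a x := by
  apply intervalIntegral.intervalIntegrable_of_integral_ne_zero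
  have : 0 < x - a := sub_pos.2 hx
  rw [integral_sub_rpow_mul_sub_rpow hβ hγ hx]
  positivity

end BetaIntegral

section RiemannLiouville

variable {β a x : ℝ}

lemma riemannLiouvilleIntegral_const_mul (c : ℝ) (f : ℝ → ℝ) :
    riemannLiouvilleIntegral β a (fun t ↦ c * f t) x = c * riemannLiouvilleIntegral β a f x := by
  simp only [riemannLiouvilleIntegral, mul_left_comm _ c, intervalIntegral.integral_const_mul]

lemma riemannLiouvilleIntegral_congr {f g : ℝ → ℝ} (hx : a ≤ x)
    (hfg : Set.EqOn f g (Set.Ioo a x)) :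
    riemannLiouvilleIntegral β a f x = riemannLiouvilleIntegral β a g x := by
  have hkernel : Set.EqOn (fun t ↦ (x - t) ^ (β - 1) * f t) (fun t ↦ (x - t) ^ (β - 1) * g t)
      (Set.Ioo a x) := fun t ht ↦ by simp only [hfg ht]
  simp only [riemannLiouvilleIntegral, intervalIntegral.integral_congr_Ioo_of_le hx hkernel]

lemma riemannLiouvilleIntegral_sub_rpow {γ : ℝ} (hβ : 0 < β) (hγ : 0 < γ) (hx : a < x) :
    riemannLiouvilleIntegral β a (fun t ↦ (t - a) ^ (γ - 1)) x =
      Gamma γ / Gamma (γ + β) * (x - a) ^ (γ + β - 1) := by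
  have hΓβ := (Gamma_pos_of_pos hβ).ne'
  rw [riemannLiouvilleIntegral, integral_sub_rpow_mul_sub_rpow hβ hγ hx]
  field_simp

lemma hasSum_riemannLiouvilleIntegral {ι : Type*} [Countable ι] {f : ι → ℝ → ℝ} (hβ : 0 < β)
    (hx : a ≤ x)
    (hf : ∀ i, IntervalIntegrable (fun t ↦ (x - t) ^ (β - 1) * f i t) volume a x)
    (hsum : Summable fun i ↦ riemannLiouvilleIntegral β a (fun t ↦ |f i t|) x) :
    HasSum (fun i ↦ riemannLiouvilleIntegral β a (f i) x)
      (riemannLiouvilleIntegral β a (fun t ↦ ∑' i, f i t) x) := by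
  have hΓ : 1 / Gamma β ≠ 0 := one_div_ne_zero (Gamma_pos_of_pos hβ).ne'
  simp only [riemannLiouvilleIntegral, intervalIntegral.integral_of_le hx, ← tsum_mul_left]
    at hsum ⊢
  refine (hasSum_integral_of_summable_integral_norm (fun i ↦ (hf i).1) ?_).mul_left _
  refine ((summable_mul_left_iff hΓ).1 hsum).congr fun i ↦
    setIntegral_congr_fun measurableSet_Ioc fun t ht ↦ ?_
  simp only [norm_mul, norm_eq_abs, abs_rpow_of_nonneg (sub_nonneg.2 ht.2),
    abs_of_nonneg (sub_nonneg.2 ht.2)]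

lemma riemannLiouvilleIntegral_mittagLeffler_term {α γ : ℝ} (hα : 0 ≤ α) (hβ : 0 < β)
    (hγ : 0 < γ) (l : ℝ) (hx : a < x) (k : ℕ) :
    riemannLiouvilleIntegral β a
        (fun t ↦ l ^ k / Gamma (α * k + γ) * (t - a) ^ (α * k + γ - 1)) x =
      (x - a) ^ (γ + β - 1) * ((l * (x - a) ^ α) ^ k / Gamma (α * k + (γ + β))) := by
  have hγk : 0 < α * k + γ := by positivity
  have hΓ := (Gamma_pos_of_pos hγk).ne'
  rw [riemannLiouvilleIntegral_const_mul, riemannLiouvilleIntegral_sub_rpow hβ hγk hx,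
    ← mul_div_assoc, rpow_mul_mul_rpow_pow (sub_pos.2 hx), ← add_assoc]
  field_simp

theorem riemannLiouvilleIntegral_mittagLeffler {α γ : ℝ} (hα : 0 < α) (hβ : 0 < β) (hγ : 0 < γ)
    (l : ℝ) (hx : a < x) :
    riemannLiouvilleIntegral β a
        (fun t ↦ (t - a) ^ (γ - 1) * mittagLeffler α γ (l * (t - a) ^ α)) x =
      (x - a) ^ (γ + β - 1) * mittagLeffler α (γ + β) (l * (x - a) ^ α) := by
  let monomial (m : ℝ) (k : ℕ) (t : ℝ) : ℝ :=
    m ^ k / Gamma (α * k + γ) * (t - a) ^ (α * k + γ - 1)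
  have hγk (k : ℕ) : 0 < α * k + γ := by positivity
  have hint (k : ℕ) :
      IntervalIntegrable (fun t ↦ (x - t) ^ (β - 1) * monomial l k t) volume a x := by
    simpa only [monomial, mul_left_comm _ (l ^ k / _)] using
      (intervalIntegrable_sub_rpow_mul_sub_rpow hβ (hγk k) hx).const_mul
        (l ^ k / Gamma (α * k + γ))
  have habs (k : ℕ) : Set.EqOn (monomial |l| k) (fun t ↦ |monomial l k t|) (Set.Ioo a x) :=
      fun t ht ↦ by
    simp only [monomial, abs_mul, abs_div, abs_pow, abs_of_pos (Gamma_pos_of_pos (hγk k)),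
      abs_of_pos (rpow_pos_of_pos (sub_pos.2 ht.1) _)]
  have hsum : Summable fun k ↦ riemannLiouvilleIntegral β a (fun t ↦ |monomial l k t|) x := by
    refine ((summable_pow_div_Gamma hα (γ + β) (|l| * (x - a) ^ α)).mul_left
      ((x - a) ^ (γ + β - 1))).congr fun k ↦ ?_
    rw [← riemannLiouvilleIntegral_congr hx.le (habs k)]
    exact (riemannLiouvilleIntegral_mittagLeffler_term hα.le hβ hγ |l| hx k).symm
  calc riemannLiouvilleIntegral β a
        (fun t ↦ (t - a) ^ (γ - 1) * mittagLeffler α γ (l * (t - a) ^ α)) x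
      = riemannLiouvilleIntegral β a (fun t ↦ ∑' k, monomial l k t) x :=
        riemannLiouvilleIntegral_congr hx.le fun t ht ↦ by
          simp only [monomial, mittagLeffler, ← tsum_mul_left, ← mul_div_assoc,
            rpow_mul_mul_rpow_pow (sub_pos.2 ht.1), mul_div_right_comm]
    _ = ∑' k, riemannLiouvilleIntegral β a (monomial l k) x :=
        (hasSum_riemannLiouvilleIntegral hβ hx.le hint hsum).tsum_eq.symm
    _ = (x - a) ^ (γ + β - 1) * mittagLeffler α (γ + β) (l * (x - a) ^ α) := by
        simp only [monomial, riemannLiouvilleIntegral_mittagLeffler_term hα.le hβ hγ l hx,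
          tsum_mul_left, mittagLeffler]

lemma riemannLiouvilleIntegral_cos (hβ : 0 < β) (c : ℝ) (hx : a < x) :
    riemannLiouvilleIntegral β a (fun t ↦ cos (c * (t - a))) x =
      (x - a) ^ β * mittagLeffler 2 (1 + β) (-c ^ 2 * (x - a) ^ 2) := by
  simpa [cos_eq_mittagLeffler, mul_pow] using
    riemannLiouvilleIntegral_mittagLeffler two_pos hβ one_pos (-c ^ 2) hx

end RiemannLiouville

theorem caputo_deriv_sin_general
    (α c a : ℝ) (hα1 : α < 1) (x : ℝ) (hx : a < x) :
    (1 / Real.Gamma (1 - α)) *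
        ∫ t in a..x, (x - t) ^ (-α) * (c * Real.cos (c * (t - a)))
      = c * (x - a) ^ (1 - α) * mittagLeffler 2 (2 - α) (-c ^ 2 * (x - a) ^ 2) := by
  have hderiv : (1 / Gamma (1 - α)) * ∫ t in a..x, (x - t) ^ (-α) * (c * cos (c * (t - a))) =
      riemannLiouvilleIntegral (1 - α) a (fun t ↦ c * cos (c * (t - a))) x := by
    rw [riemannLiouvilleIntegral, show 1 - α - 1 = -α by ring]
  rw [hderiv, riemannLiouvilleIntegral_const_mul, riemannLiouvilleIntegral_cos (sub_pos.2 hα1) c hx,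
    mul_assoc, show 1 + (1 - α) = 2 - α by ring]

/-- Caputo fractional derivative of the sine function: for `0 < α < 1` and
`x > a`, `(1/Γ(1-α)) ∫_a^x (x-t)^{-α} c cos(c(t-a)) dt
  = c (x-a)^{1-α} E_{2,2-α}( -c² (x-a)² )`. -/
theorem caputo_deriv_sin
    (α c a : ℝ) (hα0 : 0 < α) (hα1 : α < 1) (x : ℝ) (hx : a < x) :
    (1 / Real.Gamma (1 - α)) *
        ∫ t in a..x, (x - t) ^ (-α) * (c * Real.cos (c * (t - a)))
      = c * (x - a) ^ (1 - α) * mittagLeffler 2 (2 - α) (-c ^ 2 * (x - a) ^ 2) :=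
  caputo_deriv_sin_general α c a hα1 x hx
end

section
/- Convolution theorem for the Laplace transform: if F₁ and F₂ are measurable functions on [0,∞) such that t ↦ e^{-st} F₁(t) and t ↦ e^{-st} F₂(t) are integrable on (0,∞) for a real s > 0 (with suitable absolute integrability of the double integral), then ∫_0^∞ e^{-st} ( ∫_0^t F₁(t-u) F₂(u) du ) dt = ( ∫_0^∞ e^{-st} F₁(t) dt ) ( ∫_0^∞ e^{-st} F₂(t) dt ). -/
open MeasureTheory Real

/-! A weight satisfying `w (u + v) = w u * w v` passes through convolution: `w • (f * g)` is the
convolution of `w • f` and `w • g`. Hence Fubini's theorem for convolutions, applied to the weighted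
functions, gives the product formula for every such weight, in particular for `t ↦ exp (-s t)`. -/

section MultiplicativeWeight

variable {𝕜 E F G : Type*} [NontriviallyNormedField 𝕜] [NormedAlgebra ℝ 𝕜]
  [NormedAddCommGroup E] [NormedSpace 𝕜 E]
  [NormedAddCommGroup F] [NormedSpace 𝕜 F]
  [NormedAddCommGroup G] [NormedSpace ℝ G] [NormedSpace 𝕜 G] [IsScalarTower ℝ 𝕜 G]
  {w : ℝ → 𝕜}

theorem smul_intervalIntegral_convolution (hw : ∀ u v, w (u + v) = w u * w v)
    (f : ℝ → E) (g : ℝ → F) (L : E →L[𝕜] F →L[𝕜] G) (ν : Measure ℝ) (t : ℝ) :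
    w t • ∫ u in (0 : ℝ)..t, L (f (t - u)) (g u) ∂ν =
      ∫ u in (0 : ℝ)..t, L (w (t - u) • f (t - u)) (w u • g u) ∂ν := by
  rw [← intervalIntegral.integral_smul]
  congr 1 with u
  calc w t • L (f (t - u)) (g u)
      = (w (t - u) * w u) • L (f (t - u)) (g u) := by rw [← hw, sub_add_cancel]
    _ = L (w (t - u) • f (t - u)) (w u • g u) := by
      rw [L.map_smul₂, map_smul, smul_smul]

theorem integral_smul_intervalIntegral_convolution
    [NormedSpace ℝ E] [IsScalarTower ℝ 𝕜 E] [NormedSpace ℝ F] [IsScalarTower ℝ 𝕜 F]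
    [CompleteSpace E] [CompleteSpace F] [CompleteSpace G]
    {μ ν : Measure ℝ} [SFinite μ] [SFinite ν] [μ.IsAddRightInvariant] [NullSingletonClass ν]
    (hw : ∀ u v, w (u + v) = w u * w v) {f : ℝ → E} {g : ℝ → F}
    (hf : IntegrableOn (fun t ↦ w t • f t) (Set.Ioi 0) μ)
    (hg : IntegrableOn (fun t ↦ w t • g t) (Set.Ioi 0) ν) (L : E →L[𝕜] F →L[𝕜] G) :
    ∫ t in Set.Ioi (0 : ℝ), w t • ∫ u in (0 : ℝ)..t, L (f (t - u)) (g u) ∂ν ∂μ =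
      L (∫ t in Set.Ioi (0 : ℝ), w t • f t ∂μ) (∫ t in Set.Ioi (0 : ℝ), w t • g t ∂ν) := by
  simp only [smul_intervalIntegral_convolution hw]
  exact integral_posConvolution hg hf (L.bilinearRestrictScalars ℝ).flip

end MultiplicativeWeight

section LaplaceTransform

variable {𝕜 E F G : Type*} [RCLike 𝕜]
  [NormedAddCommGroup E] [NormedSpace ℝ E] [NormedSpace 𝕜 E]
  [NormedAddCommGroup F] [NormedSpace ℝ F] [NormedSpace 𝕜 F]
  [NormedAddCommGroup G] [NormedSpace ℝ G] [NormedSpace 𝕜 G]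

/-- The Laplace transform `L{f}(s) = ∫₀^∞ exp (-s t) f(t) dt` of a vector-valued function at a real
or complex parameter. The integral is a Bochner integral, so the value is `0` where
`t ↦ exp (-s t) f(t)` is not absolutely integrable. -/
noncomputable def laplaceTransform (f : ℝ → E) (s : 𝕜) : E :=
  ∫ t in Set.Ioi (0 : ℝ), NormedSpace.exp (-s * (t : 𝕜)) • f t

theorem laplace_convolution_general
    [IsScalarTower ℝ 𝕜 E] [IsScalarTower ℝ 𝕜 F] [IsScalarTower ℝ 𝕜 G]
    [CompleteSpace E] [CompleteSpace F] [CompleteSpace G]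
    {s : 𝕜} {f : ℝ → E} {g : ℝ → F}
    (hf : IntegrableOn (fun t : ℝ ↦ NormedSpace.exp (-s * (t : 𝕜)) • f t) (Set.Ioi 0))
    (hg : IntegrableOn (fun t : ℝ ↦ NormedSpace.exp (-s * (t : 𝕜)) • g t) (Set.Ioi 0))
    (L : E →L[𝕜] F →L[𝕜] G) :
    laplaceTransform (fun t ↦ ∫ u in (0 : ℝ)..t, L (f (t - u)) (g u)) s =
      L (laplaceTransform f s) (laplaceTransform g s) := by
  have exp_map_add (u v : ℝ) : NormedSpace.exp (-s * ((u + v : ℝ) : 𝕜)) =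
      NormedSpace.exp (-s * (u : 𝕜)) * NormedSpace.exp (-s * (v : 𝕜)) := by
    rw [RCLike.ofReal_add, mul_add, NormedSpace.exp_add]
  exact integral_smul_intervalIntegral_convolution exp_map_add hf hg L

end LaplaceTransform

/-- Convolution theorem for the Laplace transform:
`L{F₁ * F₂}(s) = L{F₁}(s) · L{F₂}(s)`, where
`(F₁ * F₂)(t) = ∫_0^t F₁(t-u) F₂(u) du`, under measurability, integrability
of `t ↦ e^{-st} Fᵢ(t)` on `(0,∞)` and absolute integrability of the
associated double integral. -/
theorem laplace_convolution
    (s : ℝ) (hs : 0 < s) (F₁ F₂ : ℝ → ℝ)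
    (hm₁ : Measurable F₁) (hm₂ : Measurable F₂)
    (hint₁ : IntegrableOn (fun t : ℝ => Real.exp (-s * t) * F₁ t) (Set.Ioi 0))
    (hint₂ : IntegrableOn (fun t : ℝ => Real.exp (-s * t) * F₂ t) (Set.Ioi 0))
    (hint : IntegrableOn
      (fun p : ℝ × ℝ => Real.exp (-s * (p.1 + p.2)) * (F₁ p.1 * F₂ p.2))
      (Set.Ioi 0 ×ˢ Set.Ioi 0)) :
    ∫ t in Set.Ioi (0:ℝ),
        Real.exp (-s * t) * ∫ u in (0:ℝ)..t, F₁ (t - u) * F₂ u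
      = (∫ t in Set.Ioi (0:ℝ), Real.exp (-s * t) * F₁ t)
        * ∫ t in Set.Ioi (0:ℝ), Real.exp (-s * t) * F₂ t := by
  rw [exp_eq_exp_ℝ] at hint₁ hint₂ ⊢
  exact laplace_convolution_general hint₁ hint₂ (ContinuousLinearMap.mul ℝ ℝ)
end
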